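/- For every convex body K₀ in ℝ^n there exist positive constants C = C(K₀) and δ = δ(K₀) such that for every convex body K with d_H(K, K₀) ≤ δ one has |s(K) − s(K₀)| ≤ C·d_H(K, K₀); that is, the Santaló point depends on the body in a locally Lipschitz (linearly stable) way with respect to the Hausdorff metric. -/

import Mathlib

/-!
The stability comes from writing the volume of the polar body as a Laplace-type integral and
comparing first-order conditions. Let `h_K` be the support function of `K` and
`F_K(z) = ∫ exp(⟪y, z⟫ - h_K(y)) dy`. Since `h_K` is positively homogeneous, the layer cake
formula gives `F_K(z) = n! vol(K^z)`, so a Santaló point minimizes `F_K` over the interior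
(`integral_weight_le`), and differentiation under the integral gives `∫ ⟪y, v⟫ exp(⟪y, z⟫ - h_K(y)) dy = 0`
for every `v` (`first_order`).

Take `v = z - z₀` and subtract the conditions for `(K, z)` and `(K₀, z₀)`. The change of the base
point contributes at least `c ‖v‖ ^ 2`, because `t (e^t - 1) ≥ 0` always and `≥ t ^ 2` for `t ≥ 0`,
and the weight is bounded below on a ball around `v / ‖v‖`. The change of the body contributes
at most `C' ‖v‖ d_H(K, K₀)`, because `|h_K(y) - h_{K₀}(y)| ≤ d_H(K, K₀) ‖y‖` and both weights decay
exponentially (`pointwise_lower`). Hence `c ‖v‖ ^ 2 ≤ C' ‖v‖ d_H(K, K₀)`.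
-/

open MeasureTheory Metric Set Pointwise RealInnerProductSpace

noncomputable section

abbrev Euc (n : ℕ) : Type := EuclideanSpace ℝ (Fin n)

/-- A convex body: a compact convex set with nonempty interior. -/
def IsConvexBody {n : ℕ} (K : Set (Euc n)) : Prop :=
  IsCompact K ∧ Convex ℝ K ∧ (interior K).Nonempty

/-- The polar body of `K` with center of polarity `z`. -/
def polarAt {n : ℕ} (K : Set (Euc n)) (z : Euc n) : Set (Euc n) :=
  {y | ∀ x ∈ K, ⟪y, x - z⟫ ≤ 1}

/-- `z` is the Santaló point of `K`: the interior point minimizing the volume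
of the polar body `K^z`. -/
def IsSantaloPoint {n : ℕ} (K : Set (Euc n)) (z : Euc n) : Prop :=
  z ∈ interior K ∧ ∀ w ∈ interior K, volume (polarAt K z) ≤ volume (polarAt K w)

/-- The support function of `K`; meaningful when `K` is nonempty and bounded. -/
def supp {n : ℕ} (K : Set (Euc n)) (y : Euc n) : ℝ := sSup ((fun x => ⟪y, x⟫) '' K)

/-- The weight `exp(⟪y, z⟫ - h_K(y))`, whose integral is `n!` times the volume of `K^z` for
`z` in the interior of `K`. -/
def weight {n : ℕ} (K : Set (Euc n)) (z y : Euc n) : ℝ := Real.exp (⟪y, z⟫ - supp K y)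

/-! ### Support functions -/

section Support

variable {n : ℕ} {K L : Set (Euc n)}

lemma inner_le_supp (hb : Bornology.IsBounded K) (y : Euc n) {x : Euc n} (hx : x ∈ K) :
    ⟪y, x⟫ ≤ supp K y := by
  refine le_csSup ?_ (mem_image_of_mem _ hx)
  obtain ⟨M, hM⟩ := hb.exists_norm_le
  refine ⟨‖y‖ * M, ?_⟩
  rintro _ ⟨w, hw, rfl⟩
  exact (real_inner_le_norm y w).trans (mul_le_mul_of_nonneg_left (hM w hw) (norm_nonneg _))

lemma supp_le (hne : K.Nonempty) {y : Euc n} {c : ℝ} (h : ∀ x ∈ K, ⟪y, x⟫ ≤ c) :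
    supp K y ≤ c := by
  refine csSup_le (hne.image _) ?_
  rintro _ ⟨w, hw, rfl⟩
  exact h w hw

lemma polarAt_eq (hb : Bornology.IsBounded K) (hne : K.Nonempty) (z : Euc n) :
    polarAt K z = {y | supp K y - ⟪y, z⟫ ≤ 1} := by
  ext y
  constructor
  · intro h
    have : supp K y ≤ 1 + ⟪y, z⟫ := supp_le hne fun x hx => by
      have := h x hx
      rw [inner_sub_right] at this
      linarith
    show supp K y - ⟪y, z⟫ ≤ 1
    linarith
  · intro h x hx
    have h' : supp K y - ⟪y, z⟫ ≤ 1 := h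
    have := inner_le_supp hb y hx
    rw [inner_sub_right]
    linarith

lemma supp_smul (hb : Bornology.IsBounded K) (hne : K.Nonempty) {t : ℝ} (ht : 0 ≤ t) (y : Euc n) :
    supp K (t • y) = t * supp K y := by
  have up : ∀ (s : ℝ) (w : Euc n), 0 ≤ s → supp K (s • w) ≤ s * supp K w := fun s w hs =>
    supp_le hne fun x hx => by
      rw [real_inner_smul_left]
      exact mul_le_mul_of_nonneg_left (inner_le_supp hb w hx) hs
  refine le_antisymm (up t y ht) ?_
  rcases ht.eq_or_lt with rfl | ht'
  · obtain ⟨x, hx⟩ := hne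
    have := inner_le_supp hb ((0 : ℝ) • y) hx
    simpa using this
  · have := up t⁻¹ (t • y) (by positivity)
    rw [smul_smul, inv_mul_cancel₀ ht'.ne', one_smul] at this
    calc t * supp K y ≤ t * (t⁻¹ * supp K (t • y)) := mul_le_mul_of_nonneg_left this ht
      _ = supp K (t • y) := by field_simp

lemma continuous_supp (hb : Bornology.IsBounded K) (hne : K.Nonempty) :
    Continuous (supp K) := by
  obtain ⟨M, hM⟩ := hb.exists_norm_le
  have hM0 : 0 ≤ M := by
    obtain ⟨x, hx⟩ := hne
    exact (norm_nonneg x).trans (hM x hx)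
  refine (LipschitzWith.of_le_add_mul ⟨M, hM0⟩ fun y y' => supp_le hne fun x hx => ?_).continuous
  have h1 := inner_le_supp hb y' hx
  have h2 : ⟪y - y', x⟫ ≤ ‖y - y'‖ * M :=
    (real_inner_le_norm _ _).trans (mul_le_mul_of_nonneg_left (hM x hx) (norm_nonneg _))
  rw [inner_sub_left] at h2
  rw [dist_eq_norm]
  change ⟪y, x⟫ ≤ supp K y' + M * ‖y - y'‖
  linarith

lemma le_supp_of_closedBall (hb : Bornology.IsBounded K) {z : Euc n} {r : ℝ} (hr : 0 ≤ r)
    (h : closedBall z r ⊆ K) (y : Euc n) : ⟪y, z⟫ + r * ‖y‖ ≤ supp K y := by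
  rcases eq_or_ne y 0 with rfl | hy
  · simpa using inner_le_supp hb (0 : Euc n) (h (mem_closedBall_self hr))
  have hy' : ‖y‖ ≠ 0 := norm_ne_zero_iff.2 hy
  have hmem : z + (r * ‖y‖⁻¹) • y ∈ closedBall z r := by
    rw [mem_closedBall, dist_eq_norm, add_sub_cancel_left, norm_smul, Real.norm_of_nonneg
      (by positivity), mul_assoc, inv_mul_cancel₀ hy', mul_one]
  have := inner_le_supp hb y (h hmem)
  rw [inner_add_right, real_inner_smul_right, real_inner_self_eq_norm_sq] at this
  calc ⟪y, z⟫ + r * ‖y‖ = ⟪y, z⟫ + r * ‖y‖⁻¹ * ‖y‖ ^ 2 := by field_simp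
    _ ≤ _ := this

lemma supp_le_of_closedBall (hne : K.Nonempty) {z : Euc n} {M : ℝ}
    (h : K ⊆ closedBall z M) (y : Euc n) : supp K y ≤ ⟪y, z⟫ + M * ‖y‖ :=
  supp_le hne fun x hx => by
    have h1 : ‖x - z‖ ≤ M := by simpa [dist_eq_norm] using h hx
    have h2 : ⟪y, x - z⟫ ≤ ‖y‖ * M :=
      (real_inner_le_norm _ _).trans (mul_le_mul_of_nonneg_left h1 (norm_nonneg _))
    rw [inner_sub_right] at h2
    linarith

lemma supp_le_add_hausdorffDist (hbK : Bornology.IsBounded K) (hbL : Bornology.IsBounded L)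
    (hK : K.Nonempty) (hL : L.Nonempty) (y : Euc n) :
    supp K y ≤ supp L y + hausdorffDist K L * ‖y‖ := by
  refine supp_le hK fun x hx => ?_
  have key : ∀ e > hausdorffDist K L, ⟪y, x⟫ ≤ supp L y + e * ‖y‖ := by
    intro e he
    obtain ⟨x', hx', hd⟩ := exists_dist_lt_of_hausdorffDist_lt hx he
      (hausdorffEDist_ne_top_of_nonempty_of_bounded hK hL hbK hbL)
    have h1 := inner_le_supp hbL y hx'
    have h2 : ⟪y, x - x'⟫ ≤ ‖y‖ * e :=
      (real_inner_le_norm _ _).trans (mul_le_mul_of_nonneg_left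
        (by rw [← dist_eq_norm]; exact hd.le) (norm_nonneg _))
    rw [inner_sub_right] at h2
    linarith
  refine ge_of_tendsto (x := nhdsWithin (hausdorffDist K L) (Ioi (hausdorffDist K L)))
    (f := fun e => supp L y + e * ‖y‖) ?_ ?_
  · exact ((by fun_prop : Continuous fun e : ℝ => supp L y + e * ‖y‖).tendsto _).mono_left
      nhdsWithin_le_nhds
  · filter_upwards [self_mem_nhdsWithin] with e he using key e he

lemma continuous_weight (hb : Bornology.IsBounded K) (hne : K.Nonempty) (z : Euc n) :
    Continuous (weight K z) := by
  have := continuous_supp hb hne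
  unfold weight
  fun_prop

lemma weight_le (hb : Bornology.IsBounded K) {z : Euc n} {r : ℝ} (hr : 0 ≤ r)
    (h : closedBall z r ⊆ K) (y : Euc n) : weight K z y ≤ Real.exp (-r * ‖y‖) := by
  have := le_supp_of_closedBall hb hr h y
  exact Real.exp_le_exp.2 (by linarith)

end Support

/-! ### Polar volumes as integrals -/

section Integrals

variable {n : ℕ} {K : Set (Euc n)}

lemma integrable_pow_mul_exp [NeZero n] (k : ℕ) {r : ℝ} (hr : 0 < r) :
    Integrable (fun y : Euc n => ‖y‖ ^ k * Real.exp (-r * ‖y‖)) := by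
  have hnt : Nontrivial (Euc n) := by
    refine Module.nontrivial_of_finrank_pos (R := ℝ) ?_
    simpa using Nat.pos_of_ne_zero (NeZero.ne n)
  rw [integrable_fun_norm_addHaar (volume : Measure (Euc n))
    (f := fun t : ℝ => t ^ k * Real.exp (-r * t))]
  have := integrableOn_rpow_mul_exp_neg_mul_rpow (p := 1)
    (s := ((Module.finrank ℝ (Euc n) - 1 + k : ℕ) : ℝ)) (b := r)
    (lt_of_lt_of_le (by norm_num) (Nat.cast_nonneg _)) one_pos hr
  refine this.congr_fun (fun t ht => ?_) measurableSet_Ioi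
  simp only [Real.rpow_natCast, Real.rpow_one, smul_eq_mul, pow_add]
  ring

lemma integrable_weight [NeZero n] (hb : Bornology.IsBounded K) {z : Euc n} {r : ℝ} (hr : 0 < r)
    (h : closedBall z r ⊆ K) : Integrable (weight K z) := by
  have hne : K.Nonempty := ⟨z, h (mem_closedBall_self hr.le)⟩
  refine (integrable_pow_mul_exp 0 hr).mono' (continuous_weight hb hne z).aestronglyMeasurable ?_
  refine Filter.Eventually.of_forall fun y => ?_
  rw [Real.norm_of_nonneg (show 0 ≤ weight K z y from (Real.exp_pos _).le)]
  simpa using weight_le hb hr.le h y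

lemma exists_closedBall_subset {z : Euc n} (hz : z ∈ interior K) :
    ∃ r > 0, closedBall z r ⊆ K :=
  nhds_basis_closedBall.mem_iff.1 (mem_interior_iff_mem_nhds.1 hz)

/-- Positive homogeneity turns a comparison of polar volumes into a comparison of the volumes of
all superlevel sets of the weights, hence of their integrals. -/
lemma integral_weight_le [NeZero n] (hb : Bornology.IsBounded K) {z w : Euc n}
    (hz : z ∈ interior K) (hw : w ∈ interior K)
    (hvol : volume (polarAt K z) ≤ volume (polarAt K w)) :
    ∫ y, weight K z y ≤ ∫ y, weight K w y := by
  obtain ⟨r, hr, hzr⟩ := exists_closedBall_subset hz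
  obtain ⟨r', hr', hwr⟩ := exists_closedBall_subset hw
  have hne : K.Nonempty := ⟨z, interior_subset hz⟩
  have nn : ∀ u : Euc n, 0 ≤ᵐ[volume] weight K u :=
    fun u => Filter.Eventually.of_forall fun y => (Real.exp_pos _).le
  have hint : 0 ≤ ∫ y, weight K w y := integral_nonneg fun y => (Real.exp_pos _).le
  rw [← ENNReal.ofReal_le_ofReal_iff hint,
    ofReal_integral_eq_lintegral_ofReal (integrable_weight hb hr hzr) (nn z),
    ofReal_integral_eq_lintegral_ofReal (integrable_weight hb hr' hwr) (nn w),
    lintegral_eq_lintegral_meas_le _ (nn z) (continuous_weight hb hne z).aemeasurable,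
    lintegral_eq_lintegral_meas_le _ (nn w) (continuous_weight hb hne w).aemeasurable]
  refine setLIntegral_mono' measurableSet_Ioi fun t ht => ?_
  have ht0 : 0 < t := ht
  rcases lt_or_ge t 1 with ht1 | ht1
  · -- The superlevel set at height `t` is the polar body dilated by `-log t`.
    have hl : 0 < -Real.log t := by linarith [Real.log_neg ht0 ht1]
    have dil : ∀ u : Euc n, {y | t ≤ weight K u y} = (-Real.log t) • polarAt K u := by
      intro u
      ext y
      rw [mem_smul_set_iff_inv_smul_mem₀ hl.ne', polarAt_eq hb hne]
      change t ≤ Real.exp _ ↔ supp K ((-Real.log t)⁻¹ • y) - ⟪(-Real.log t)⁻¹ • y, u⟫ ≤ 1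
      rw [supp_smul hb hne (by positivity), real_inner_smul_left, ← mul_sub,
        inv_mul_le_iff₀ hl, ← Real.log_le_iff_le_exp ht0]
      constructor <;> intro h <;> linarith
    rw [dil z, dil w, Measure.addHaar_smul, Measure.addHaar_smul]
    gcongr
  · -- At height `t ≥ 1` the superlevel set for `z` is contained in `{0}`.
    refine measure_mono fun y hy => ?_
    have hy' : t ≤ Real.exp (⟪y, z⟫ - supp K y) := hy
    have h1 := le_supp_of_closedBall hb hr.le hzr y
    have h2 : 0 ≤ ⟪y, z⟫ - supp K y := Real.one_le_exp_iff.1 (ht1.trans hy')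
    have h3 : ‖y‖ = 0 := le_antisymm (by nlinarith) (norm_nonneg _)
    have h4 : y = 0 := norm_eq_zero.1 h3
    subst h4
    change t ≤ Real.exp _
    simpa using hy'

/-- The first-order condition at a Santaló point: the weight has its barycenter at the origin. -/
lemma first_order [NeZero n] (hb : Bornology.IsBounded K) {z : Euc n} (hz : IsSantaloPoint K z)
    (v : Euc n) :
    Integrable (fun y => ⟪y, v⟫ * weight K z y) ∧ ∫ y, ⟪y, v⟫ * weight K z y = 0 := by
  obtain ⟨r, hr, hzr⟩ := exists_closedBall_subset hz.1
  have hne : K.Nonempty := ⟨z, interior_subset hz.1⟩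
  have hw := continuous_weight hb hne
  set ε := r / (2 * (‖v‖ + 1)) with hε
  have hv0 := norm_nonneg v
  have hεpos : 0 < ε := by positivity
  have hεv : ε * ‖v‖ ≤ r / 2 := by
    rw [hε, div_mul_eq_mul_div, div_le_div_iff₀ (by positivity) (by norm_num)]
    nlinarith
  have hbound : ∀ y : Euc n, ∀ t ∈ ball (0 : ℝ) ε,
      ‖⟪y, v⟫ * weight K (z + t • v) y‖ ≤ ‖v‖ * (‖y‖ ^ 1 * Real.exp (-(r / 2) * ‖y‖)) := by
    intro y t ht
    have ht' : |t| < ε := by simpa using ht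
    have h1 := le_supp_of_closedBall hb hr.le hzr y
    have h2 : t * ⟪y, v⟫ ≤ r / 2 * ‖y‖ := by
      calc t * ⟪y, v⟫ ≤ |t * ⟪y, v⟫| := le_abs_self _
        _ = |t| * |⟪y, v⟫| := abs_mul _ _
        _ ≤ ε * (‖y‖ * ‖v‖) := by
          gcongr
          exact abs_real_inner_le_norm y v
        _ = ε * ‖v‖ * ‖y‖ := by ring
        _ ≤ _ := by gcongr
    have h3 : weight K (z + t • v) y ≤ Real.exp (-(r / 2) * ‖y‖) := by
      refine Real.exp_le_exp.2 ?_
      rw [inner_add_right, real_inner_smul_right]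
      linarith
    rw [norm_mul, Real.norm_of_nonneg (show 0 ≤ weight K (z + t • v) y from (Real.exp_pos _).le)]
    calc ‖⟪y, v⟫‖ * weight K (z + t • v) y ≤ (‖y‖ * ‖v‖) * Real.exp (-(r / 2) * ‖y‖) := by
          gcongr
          · exact (Real.exp_pos _).le
          · exact abs_real_inner_le_norm y v
      _ = _ := by ring
  have hderiv := hasDerivAt_integral_of_dominated_loc_of_deriv_le (μ := (volume : Measure (Euc n)))
    (F := fun t y => weight K (z + t • v) y) (x₀ := (0 : ℝ))
    (F' := fun t y => ⟪y, v⟫ * weight K (z + t • v) y)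
    (bound := fun y => ‖v‖ * (‖y‖ ^ 1 * Real.exp (-(r / 2) * ‖y‖)))
    (ball_mem_nhds 0 hεpos)
    (Filter.Eventually.of_forall fun t => (hw _).aestronglyMeasurable)
    (by simpa using integrable_weight hb hr hzr)
    (by
      have := hw z
      simp only [zero_smul, add_zero]
      exact (by fun_prop : Continuous fun y => ⟪y, v⟫ * weight K z y).aestronglyMeasurable)
    (Filter.Eventually.of_forall hbound)
    ((integrable_pow_mul_exp 1 (half_pos hr)).const_mul _)
    (Filter.Eventually.of_forall fun y t _ => by
      have h1 : HasDerivAt (fun t : ℝ => ⟪y, z⟫ + t * ⟪y, v⟫ - supp K y) ⟪y, v⟫ t := by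
        simpa using (((hasDerivAt_id t).mul_const ⟪y, v⟫).const_add ⟪y, z⟫).sub_const (supp K y)
      have h2 := h1.exp
      simp only [weight, inner_add_right, real_inner_smul_right]
      rw [mul_comm]
      exact h2)
  simp only [zero_smul, add_zero] at hderiv
  refine ⟨hderiv.1, ?_⟩
  refine IsLocalMin.hasDerivAt_eq_zero (f := fun t => ∫ y, weight K (z + t • v) y) ?_ hderiv.2
  have hcont : Continuous fun t : ℝ => z + t • v := by fun_prop
  have hev : ∀ᶠ t : ℝ in nhds 0, z + t • v ∈ interior K :=
    hcont.continuousAt.eventually_mem (isOpen_interior.mem_nhds (by simpa using hz.1))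
  filter_upwards [hev] with t ht
  simpa using integral_weight_le hb hz.1 ht (hz.2 _ ht)

end Integrals

/-! ### Comparing first-order conditions -/

lemma abs_exp_sub_exp_le {p q s : ℝ} (hp : p ≤ s) (hq : q ≤ s) :
    |Real.exp p - Real.exp q| ≤ |p - q| * Real.exp s := by
  wlog h : q ≤ p generalizing p q
  · rw [abs_sub_comm, abs_sub_comm p q]
    exact this hq hp (le_of_not_ge h)
  rw [abs_of_nonneg (by linarith [Real.exp_le_exp.2 h]), abs_of_nonneg (by linarith)]
  have h1 : q - p + 1 ≤ Real.exp (q - p) := Real.add_one_le_exp _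
  have h2 : Real.exp q = Real.exp p * Real.exp (q - p) := by rw [← Real.exp_add]; ring_nf
  calc Real.exp p - Real.exp q = Real.exp p * (1 - Real.exp (q - p)) := by rw [h2]; ring
    _ ≤ Real.exp p * (p - q) := mul_le_mul_of_nonneg_left (by linarith) (Real.exp_pos p).le
    _ ≤ Real.exp s * (p - q) :=
      mul_le_mul_of_nonneg_right (Real.exp_le_exp.2 hp) (by linarith)
    _ = _ := mul_comm _ _

lemma mul_exp_sub_one_nonneg (t : ℝ) : 0 ≤ t * (Real.exp t - 1) := by
  rcases le_total 0 t with h | h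
  · exact mul_nonneg h (by linarith [Real.add_one_le_exp t])
  · exact mul_nonneg_of_nonpos_of_nonpos h (by linarith [Real.exp_le_one_iff.2 h])

/-- The integrand of the difference of the two first-order conditions in direction `v = z - z₀`:
a quadratic gain on a ball around `v / ‖v‖`, against an error linear in the distance `d`
of the bodies. -/
lemma pointwise_lower {n : ℕ} {K K₀ : Set (Euc n)} {z z₀ : Euc n} {d r M : ℝ}
    (hr : 0 ≤ r) (hdr : d ≤ r) (hM : 0 ≤ M) (hv : z - z₀ ≠ 0)
    (h1 : ∀ y, supp K y ≤ supp K₀ y + d * ‖y‖) (h2 : ∀ y, supp K₀ y ≤ supp K y + d * ‖y‖)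
    (hlow : ∀ y, ⟪y, z₀⟫ + 2 * r * ‖y‖ ≤ supp K₀ y) (hup : ∀ y, supp K₀ y ≤ ⟪y, z₀⟫ + M * ‖y‖)
    (y : Euc n) :
    (ball (‖z - z₀‖⁻¹ • (z - z₀)) (1 / 2)).indicator
        (fun _ => (‖z - z₀‖ / 2) ^ 2 * Real.exp (-(M + r) * (3 / 2))) y
      - d * ‖z - z₀‖ * (‖y‖ ^ 2 * Real.exp (-r * ‖y‖))
      ≤ ⟪y, z - z₀⟫ * weight K z y - ⟪y, z - z₀⟫ * weight K₀ z₀ y := by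
  set v := z - z₀ with hvdef
  set t := ⟪y, v⟫ with ht
  have hy0 := norm_nonneg y
  have hzt : ⟪y, z⟫ = ⟪y, z₀⟫ + t := by rw [ht, hvdef, inner_sub_right]; ring
  have hdy : d * ‖y‖ ≤ r * ‖y‖ := by gcongr
  have hsplit : t * weight K z y - t * weight K₀ z₀ y
      = t * (Real.exp t - 1) * weight K z₀ y + t * (weight K z₀ y - weight K₀ z₀ y) := by
    have : weight K z y = Real.exp t * weight K z₀ y := by
      unfold weight
      rw [← Real.exp_add, hzt]
      ring_nf
    rw [this]
    ring
  have hbody : -(d * ‖v‖ * (‖y‖ ^ 2 * Real.exp (-r * ‖y‖)))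
      ≤ t * (weight K z₀ y - weight K₀ z₀ y) := by
    have e1 : |weight K z₀ y - weight K₀ z₀ y| ≤ (d * ‖y‖) * Real.exp (-r * ‖y‖) := by
      refine (abs_exp_sub_exp_le (s := -r * ‖y‖) ?_ ?_).trans ?_
      · linarith [hlow y, h2 y]
      · nlinarith [hlow y]
      · gcongr
        rw [abs_le]
        constructor <;> linarith [h1 y, h2 y]
    have e2 : |t| ≤ ‖y‖ * ‖v‖ := abs_real_inner_le_norm y v
    have e3 : |t * (weight K z₀ y - weight K₀ z₀ y)|
        ≤ (‖y‖ * ‖v‖) * ((d * ‖y‖) * Real.exp (-r * ‖y‖)) := by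
      rw [abs_mul]
      gcongr
    have e4 := neg_abs_le (t * (weight K z₀ y - weight K₀ z₀ y))
    have e5 : (‖y‖ * ‖v‖) * ((d * ‖y‖) * Real.exp (-r * ‖y‖))
        = d * ‖v‖ * (‖y‖ ^ 2 * Real.exp (-r * ‖y‖)) := by ring
    linarith
  have hpoint : (ball (‖v‖⁻¹ • v) (1 / 2)).indicator
        (fun _ => (‖v‖ / 2) ^ 2 * Real.exp (-(M + r) * (3 / 2))) y
      ≤ t * (Real.exp t - 1) * weight K z₀ y := by
    by_cases hy : y ∈ ball (‖v‖⁻¹ • v) (1 / 2)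
    · rw [indicator_of_mem hy]
      have hvn : ‖v‖ ≠ 0 := norm_ne_zero_iff.2 hv
      have hu : ‖‖v‖⁻¹ • v‖ = 1 := by
        rw [norm_smul, norm_inv, norm_norm, inv_mul_cancel₀ hvn]
      have hyu : ‖y - ‖v‖⁻¹ • v‖ ≤ 1 / 2 := by
        rw [← dist_eq_norm]
        exact (mem_ball.1 hy).le
      have hy32 : ‖y‖ ≤ 3 / 2 := by
        have := norm_le_norm_add_norm_sub' y (‖v‖⁻¹ • v)
        linarith
      have htv : ‖v‖ / 2 ≤ t := by
        have e1 : |⟪y - ‖v‖⁻¹ • v, v⟫| ≤ 1 / 2 * ‖v‖ :=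
          (abs_real_inner_le_norm _ _).trans (by gcongr)
        have e2 : ⟪‖v‖⁻¹ • v, v⟫ = ‖v‖ := by
          rw [real_inner_smul_left, real_inner_self_eq_norm_sq]
          field_simp
        rw [inner_sub_left, e2] at e1
        linarith [(abs_le.1 e1).1]
      have ht0 : 0 ≤ t := le_trans (by positivity) htv
      have e3 : (‖v‖ / 2) ^ 2 ≤ t * (Real.exp t - 1) := by
        calc (‖v‖ / 2) ^ 2 ≤ t ^ 2 := by gcongr
          _ = t * t := sq t
          _ ≤ _ := by
            gcongr
            linarith [Real.add_one_le_exp t]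
      have e4 : Real.exp (-(M + r) * (3 / 2)) ≤ weight K z₀ y := by
        refine Real.exp_le_exp.2 ?_
        nlinarith [h1 y, hup y]
      gcongr
      exact mul_exp_sub_one_nonneg t
    · rw [indicator_of_notMem hy]
      exact mul_nonneg (mul_exp_sub_one_nonneg t) (Real.exp_pos _).le
  rw [hsplit]
  linarith

/-- Stability around a fixed Santaló point of `K₀`. -/
lemma stability_at {n : ℕ} [NeZero n] {K₀ : Set (Euc n)} (hK₀ : IsConvexBody K₀) {z₀ : Euc n}
    (hz₀ : IsSantaloPoint K₀ z₀) :
    ∃ C > 0, ∃ δ > 0, ∀ K : Set (Euc n), IsConvexBody K → hausdorffDist K K₀ ≤ δ →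
      ∀ z : Euc n, IsSantaloPoint K z → ‖z - z₀‖ ≤ C * hausdorffDist K K₀ := by
  obtain ⟨ρ, hρ, hball⟩ := exists_closedBall_subset hz₀.1
  have hb₀ := hK₀.1.isBounded
  have hne₀ : K₀.Nonempty := ⟨z₀, interior_subset hz₀.1⟩
  obtain ⟨M, hM, hMK⟩ := hb₀.subset_closedBall_lt 0 z₀
  set r := ρ / 2 with hrdef
  have hr : 0 < r := half_pos hρ
  set c := 1 / 4 * Real.exp (-(M + r) * (3 / 2)) * volume.real (ball (0 : Euc n) (1 / 2)) with hc
  set C' := ∫ y : Euc n, ‖y‖ ^ 2 * Real.exp (-r * ‖y‖) with hC'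
  have hcpos : 0 < c := by
    have : 0 < volume.real (ball (0 : Euc n) (1 / 2)) :=
      ENNReal.toReal_pos (measure_ball_pos _ _ (by norm_num)).ne' measure_ball_lt_top.ne
    positivity
  have hC'nn : 0 ≤ C' := integral_nonneg fun y => by positivity
  refine ⟨C' / c + 1, by positivity, r, hr, fun K hK hd z hz => ?_⟩
  have hb := hK.1.isBounded
  have hne : K.Nonempty := ⟨z, interior_subset hz.1⟩
  have hd0 : 0 ≤ hausdorffDist K K₀ := hausdorffDist_nonneg
  set d := hausdorffDist K K₀ with hddef
  by_cases hv : z - z₀ = 0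
  · rw [hv, norm_zero]
    positivity
  have hvpos : 0 < ‖z - z₀‖ := norm_pos_iff.2 hv
  obtain ⟨i1, e1⟩ := first_order hb hz (z - z₀)
  obtain ⟨i0, e0⟩ := first_order hb₀ hz₀ (z - z₀)
  have hpt := pointwise_lower hr.le hd hM.le hv
    (supp_le_add_hausdorffDist hb hb₀ hne hne₀)
    (fun y => by
      have := supp_le_add_hausdorffDist hb₀ hb hne₀ hne y
      rwa [hausdorffDist_comm] at this)
    (fun y => by
      have := le_supp_of_closedBall hb₀ hρ.le hball y
      rwa [show 2 * r = ρ by rw [hrdef]; ring])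
    (supp_le_of_closedBall hne₀ hMK)
  have iB : Integrable ((ball (‖z - z₀‖⁻¹ • (z - z₀)) (1 / 2)).indicator
      (fun _ : Euc n => (‖z - z₀‖ / 2) ^ 2 * Real.exp (-(M + r) * (3 / 2)))) :=
    (integrable_indicator_iff measurableSet_ball).2
      (integrableOn_const measure_ball_lt_top.ne)
  have iE := (integrable_pow_mul_exp (n := n) 2 hr).const_mul (d * ‖z - z₀‖)
  have hmono := integral_mono (iB.sub iE) (i1.sub i0) hpt
  simp only [Pi.sub_apply] at hmono
  rw [integral_sub iB iE, integral_sub i1 i0, e1, e0, integral_indicator measurableSet_ball,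
    setIntegral_const, Measure.addHaar_real_ball_center, integral_const_mul, smul_eq_mul,
    ← hC'] at hmono
  have hmain : ‖z - z₀‖ * (c * ‖z - z₀‖) ≤ ‖z - z₀‖ * (C' * d) := by
    rw [hc]
    linarith
  have hlin : c * ‖z - z₀‖ ≤ C' * d := le_of_mul_le_mul_left hmain hvpos
  calc ‖z - z₀‖ ≤ C' * d / c := by rw [le_div_iff₀ hcpos]; linarith
    _ = C' / c * d := by ring
    _ ≤ (C' / c + 1) * d := by gcongr; linarith

/-- Local Lipschitz (linear) stability of the Santaló point with respect to the
Hausdorff metric: for every convex body `K₀` there are `C, δ > 0` such that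
every convex body `K` with `d_H(K, K₀) ≤ δ` satisfies
`|s(K) − s(K₀)| ≤ C · d_H(K, K₀)`. -/
theorem santalo_point_locally_lipschitz (n : ℕ) (K₀ : Set (Euc n))
    (hK₀ : IsConvexBody K₀) :
    ∃ C > 0, ∃ δ > 0, ∀ K : Set (Euc n), IsConvexBody K →
      hausdorffDist K K₀ ≤ δ →
      ∀ z z₀ : Euc n, IsSantaloPoint K z → IsSantaloPoint K₀ z₀ →
        ‖z - z₀‖ ≤ C * hausdorffDist K K₀ := by
  rcases Nat.eq_zero_or_pos n with rfl | hn
  · refine ⟨1, one_pos, 1, one_pos, fun K _ _ z z₀ _ _ => ?_⟩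
    rw [Subsingleton.elim z z₀, sub_self, norm_zero, one_mul]
    exact hausdorffDist_nonneg
  have : NeZero n := ⟨hn.ne'⟩
  by_cases hex : ∃ z₀, IsSantaloPoint K₀ z₀
  · obtain ⟨p, hp⟩ := hex
    obtain ⟨C, hC, δ, hδ, H⟩ := stability_at hK₀ hp
    refine ⟨C, hC, δ, hδ, fun K hK hd z z₀ hz hz₀ => ?_⟩
    -- The constants belong to the chosen point `p`; the case `K = K₀` shows that `z₀ = p`.
    have huniq := H K₀ hK₀ (by rw [hausdorffDist_self_zero]; exact hδ.le) z₀ hz₀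
    rw [hausdorffDist_self_zero, mul_zero] at huniq
    have : z₀ = p := sub_eq_zero.1 (norm_le_zero_iff.1 huniq)
    rw [this]
    exact H K hK hd z hz
  · exact ⟨1, one_pos, 1, one_pos, fun K _ _ z z₀ _ hz₀ => (hex ⟨z₀, hz₀⟩).elim⟩
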